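/- The Cayley graph of (ℤ², +) with generating set {(1,0), (0,1)} (the 2-dimensional grid) admits a decomposition into 2 edge-disjoint Hamiltonian double-rays. -/

import Mathlib

/-- The 2-dimensional grid: the Cayley graph of `ℤ²` with generators `(1,0)` and `(0,1)`. -/
def gridGraph : SimpleGraph (ℤ × ℤ) :=
  SimpleGraph.fromRel (fun u v => v = u + (1, 0) ∨ v = u + (0, 1))

/-- A Hamiltonian (spanning) double-ray: the vertex set is infinite and the graph is
connected and 2-regular. -/
def IsHamDoubleRay {V : Type*} (H : SimpleGraph V) : Prop :=
  Infinite V ∧ H.Connected ∧ ∀ v : V, (H.neighborSet v).ncard = 2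

/-!
Colour the horizontal edges of the grid with two colours, and give every vertical edge the colour
opposite to that of its mirror image in the diagonal `x = y`. The reflection then exchanges the two
colour classes, so it suffices that one of them is a double-ray. A class is 2-regular as soon as
every vertex has as many horizontal edges in it as its mirror image has.

The colouring used here makes the class a double spiral: two arms start at the origin, wind
counterclockwise around each other, and are exchanged by `v ↦ -v`. Each side of a turn is a strip
two vertices wide, traversed in a zigzag that crosses the strip at every other step. Walking back
along an arm leads to the origin, hence the class is connected.
-/

namespace IsHamDoubleRay

variable {V W : Type*}

theorem of_iso {G : SimpleGraph V} {H : SimpleGraph W} (e : G ≃g H) (hH : IsHamDoubleRay H) :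
    IsHamDoubleRay G := by
  obtain ⟨infinite, connected, degree⟩ := hH
  refine ⟨e.toEquiv.infinite_iff.2 infinite, e.connected_iff.2 connected, fun v => ?_⟩
  rw [← degree (e v)]
  exact Nat.card_congr (e.mapNeighborSet v)

theorem exists_decomposition {G H : SimpleGraph V} (hle : H ≤ G) (hH : IsHamDoubleRay H)
    (hsdiff : IsHamDoubleRay (G \ H)) :
    ∃ D : Fin 2 → SimpleGraph V,
      (∀ i, D i ≤ G ∧ IsHamDoubleRay (D i)) ∧
      (Pairwise fun i j => Disjoint (D i).edgeSet (D j).edgeSet) ∧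
      (⋃ i, (D i).edgeSet) = G.edgeSet := by
  have disjoint : Disjoint H.edgeSet (G \ H).edgeSet :=
    SimpleGraph.disjoint_edgeSet.2 disjoint_sdiff_self_right
  refine ⟨![H, G \ H], Fin.forall_fin_two.2 ⟨⟨hle, hH⟩, sdiff_le, hsdiff⟩, ?_, ?_⟩
  · intro i j hij
    fin_cases i <;> fin_cases j
    exacts [absurd rfl hij, disjoint, disjoint.symm, absurd rfl hij]
  · calc ⋃ i, (![H, G \ H] i).edgeSet = H.edgeSet ∪ (G \ H).edgeSet := by
          ext e
          simp only [Set.mem_iUnion, Fin.exists_fin_two, Matrix.cons_val_zero, Matrix.cons_val_one,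
            Set.mem_union]
      _ = G.edgeSet := by rw [← SimpleGraph.edgeSet_sup, sup_sdiff_cancel_right hle]

end IsHamDoubleRay

theorem connected_of_forall_exists_adj_lt {V α : Type*} [LT α] [WellFoundedLT α]
    {G : SimpleGraph V} (root : V) (rank : V → α)
    (descent : ∀ v ≠ root, ∃ w, G.Adj v w ∧ rank w < rank v) : G.Connected := by
  have reachable_root (v : V) : G.Reachable v root := by
    induction v using (InvImage.wf rank wellFounded_lt).induction with
    | h v ih =>
      obtain rfl | hv := eq_or_ne v root
      · rfl
      · obtain ⟨w, adj, lt⟩ := descent v hv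
        exact adj.reachable.trans (ih w lt)
  have : Nonempty V := ⟨root⟩
  exact ⟨fun u v => (reachable_root u).trans (reachable_root v).symm⟩

theorem gridGraph_adj_iff (x y a b : ℤ) :
    gridGraph.Adj (x, y) (a, b) ↔
      (a = x + 1 ∧ b = y) ∨ (a = x - 1 ∧ b = y) ∨ (a = x ∧ b = y + 1) ∨ (a = x ∧ b = y - 1) := by
  simp only [gridGraph, SimpleGraph.fromRel_adj, Prod.mk_add_mk, Prod.mk.injEq, ne_eq]
  omega

/-- The colour class of the grid determined by a colouring `h` of the horizontal edges, where
`h x y` refers to the edge from `(x, y)` to `(x + 1, y)`: a vertical edge belongs to the class iff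
its mirror image in the diagonal does not. -/
def mirrorSplit (h : ℤ → ℤ → Prop) : SimpleGraph (ℤ × ℤ) :=
  SimpleGraph.fromRel fun u v =>
    (v = u + (1, 0) ∧ h u.1 u.2) ∨ (v = u + (0, 1) ∧ ¬ h u.2 u.1)

/-- The number of horizontal edges at `(x, y)` in the colour class `h`. -/
def horizontalDegree (h : ℤ → ℤ → Prop) [DecidableRel h] (x y : ℤ) : ℕ :=
  (if h x y then 1 else 0) + if h (x - 1) y then 1 else 0

section mirrorSplit

variable (h : ℤ → ℤ → Prop)

theorem mirrorSplit_adj_iff (x y a b : ℤ) :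
    (mirrorSplit h).Adj (x, y) (a, b) ↔
      (a = x + 1 ∧ b = y ∧ h x y) ∨ (a = x - 1 ∧ b = y ∧ h (x - 1) y) ∨
      (a = x ∧ b = y + 1 ∧ ¬ h y x) ∨ (a = x ∧ b = y - 1 ∧ ¬ h (y - 1) x) := by
  simp only [mirrorSplit, SimpleGraph.fromRel_adj, Prod.mk_add_mk, Prod.mk.injEq, add_zero, ne_eq]
  constructor
  · grind
  · rintro (⟨rfl, rfl, edge⟩ | ⟨rfl, rfl, edge⟩ | ⟨rfl, rfl, edge⟩ | ⟨rfl, rfl, edge⟩) <;> grind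

theorem mirrorSplit_le_gridGraph : mirrorSplit h ≤ gridGraph := by
  rintro ⟨x, y⟩ ⟨a, b⟩ adj
  rw [mirrorSplit_adj_iff] at adj
  rw [gridGraph_adj_iff]
  tauto

theorem gridGraph_sdiff_mirrorSplit :
    gridGraph \ mirrorSplit h = (mirrorSplit h).comap Prod.swap := by
  ext ⟨x, y⟩ ⟨a, b⟩
  simp only [SimpleGraph.sdiff_adj, SimpleGraph.comap_adj, Prod.swap_prod_mk, gridGraph_adj_iff,
    mirrorSplit_adj_iff]
  constructor
  · rintro ⟨⟨rfl, rfl⟩ | ⟨rfl, rfl⟩ | ⟨rfl, rfl⟩ | ⟨rfl, rfl⟩, not_adj⟩ <;> grind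
  · rintro (⟨rfl, rfl, edge⟩ | ⟨rfl, rfl, edge⟩ | ⟨rfl, rfl, edge⟩ | ⟨rfl, rfl, edge⟩) <;> grind

theorem ncard_neighborSet_mirrorSplit_add [DecidableRel h] (x y : ℤ) :
    ((mirrorSplit h).neighborSet (x, y)).ncard + horizontalDegree h y x =
      2 + horizontalDegree h x y := by
  classical
  have neighborSet_eq : (mirrorSplit h).neighborSet (x, y) =
      (({(x + 1, y), (x - 1, y), (x, y + 1), (x, y - 1)} : Finset (ℤ × ℤ)).filter
        ((mirrorSplit h).Adj (x, y)) : Set (ℤ × ℤ)) := by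
    ext ⟨a, b⟩
    have := mirrorSplit_le_gridGraph h (v := (x, y)) (w := (a, b))
    simpa [← gridGraph_adj_iff] using this
  rw [neighborSet_eq, Set.ncard_coe_finset, Finset.card_filter, Finset.sum_insert (by grind),
    Finset.sum_insert (by grind), Finset.sum_insert (by grind), Finset.sum_singleton]
  have right : (mirrorSplit h).Adj (x, y) (x + 1, y) ↔ h x y := by
    grind [mirrorSplit_adj_iff]
  have left : (mirrorSplit h).Adj (x, y) (x - 1, y) ↔ h (x - 1) y := by
    grind [mirrorSplit_adj_iff]
  have up : (mirrorSplit h).Adj (x, y) (x, y + 1) ↔ ¬ h y x := by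
    grind [mirrorSplit_adj_iff]
  have down : (mirrorSplit h).Adj (x, y) (x, y - 1) ↔ ¬ h (y - 1) x := by
    grind [mirrorSplit_adj_iff]
  simp only [right, left, up, down, horizontalDegree]
  split_ifs <;> rfl

variable {h}

theorem mirrorSplit_adj_neg_neg (hneg : ∀ x y, h (-x - 1) (-y) ↔ h x y) (u v : ℤ × ℤ) :
    (mirrorSplit h).Adj (-u) (-v) ↔ (mirrorSplit h).Adj u v := by
  obtain ⟨x, y⟩ := u
  obtain ⟨a, b⟩ := v
  simp only [Prod.neg_mk, mirrorSplit_adj_iff]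
  grind

theorem horizontalDegree_neg_neg [DecidableRel h] (hneg : ∀ x y, h (-x - 1) (-y) ↔ h x y)
    (x y : ℤ) : horizontalDegree h (-x) (-y) = horizontalDegree h x y := by
  have left : h (-x - 1) (-y) ↔ h x y := hneg x y
  have right : h (-x) (-y) ↔ h (x - 1) y := by
    rw [← hneg (x - 1) y, neg_sub', sub_neg_eq_add, add_sub_cancel_right]
  simp only [horizontalDegree, left, right]
  exact add_comm _ _

end mirrorSplit

/-- The horizontal edges of the double spiral. The first case concerns the right and left sectors
of the plane cut out by the two diagonals, where the edges cross the strips `2k ≤ x ≤ 2k + 1` with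
`0 ≤ k` and their images under `v ↦ -v`; the second concerns the top and bottom sectors, where every
other edge in each row is taken. -/
def SpiralEdge (x y : ℤ) : Prop :=
  if 2 * y.natAbs < (2 * x + 1).natAbs then 2 ∣ x ↔ 0 ≤ x else 2 ∣ x + y ↔ 0 < y

instance : DecidableRel SpiralEdge := fun _ _ => inferInstanceAs (Decidable (ite _ _ _))

theorem spiralEdge_neg_sub_one_neg (x y : ℤ) : SpiralEdge (-x - 1) (-y) ↔ SpiralEdge x y := by
  unfold SpiralEdge
  split_ifs <;> omega

theorem horizontalDegree_spiralEdge_eq_one {x y : ℤ} (hxy : x.natAbs ≠ y.natAbs) :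
    horizontalDegree SpiralEdge x y = 1 := by
  unfold horizontalDegree SpiralEdge
  grind

theorem horizontalDegree_spiralEdge_comm (x y : ℤ) :
    horizontalDegree SpiralEdge x y = horizontalDegree SpiralEdge y x := by
  by_cases hxy : x.natAbs = y.natAbs
  · obtain rfl | rfl := Int.natAbs_eq_natAbs_iff.1 hxy
    · rfl
    · simpa only [neg_neg] using
        (horizontalDegree_neg_neg spiralEdge_neg_sub_one_neg (-y) y).symm
  · rw [horizontalDegree_spiralEdge_eq_one hxy,
      horizontalDegree_spiralEdge_eq_one (Ne.symm hxy)]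

theorem ncard_neighborSet_mirrorSplit_spiralEdge (v : ℤ × ℤ) :
    ((mirrorSplit SpiralEdge).neighborSet v).ncard = 2 := by
  have := ncard_neighborSet_mirrorSplit_add SpiralEdge v.1 v.2
  rw [horizontalDegree_spiralEdge_comm] at this
  exact Nat.add_right_cancel this

/-- The position of a vertex on its arm of the double spiral, counted from the origin and ordered
lexicographically: the number of strips completed before, then a coordinate growing by one with each
step inside the strip, namely twice the distance from the diagonal at the start of the strip,
corrected by parities. The first case concerns the vertical strips `2k ≤ |x| ≤ 2k + 1`, the second
the horizontal strips `2k + 1 ≤ |y| ≤ 2k + 2`, where `y.natAbs - 1` does not truncate. -/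
def spiralRank (v : ℤ × ℤ) : ℕ ×ₗ ℕ :=
  let (x, y) := v
  if y.natAbs < x.natAbs ∨ x = y then
    toLex (2 * (x.natAbs / 2),
      2 * (x + y).natAbs + (x + y).natAbs % 2 + 2 * ((x.natAbs + 1) % 2))
  else
    toLex (2 * ((y.natAbs - 1) / 2) + 1,
      2 * (x - y).natAbs + (x - y).natAbs % 2 + 2 * (y.natAbs % 2))

theorem spiralRank_neg (v : ℤ × ℤ) : spiralRank (-v) = spiralRank v := by
  obtain ⟨x, y⟩ := v
  have add : (-x + -y).natAbs = (x + y).natAbs := by omega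
  have sub : (-x - -y).natAbs = (x - y).natAbs := by omega
  simp only [spiralRank, Int.natAbs_neg, neg_inj, add, sub]

theorem exists_adj_spiralRank_lt_of_right {x y : ℤ} (hxy : -x < y) (hyx : y ≤ x) :
    ∃ w, (mirrorSplit SpiralEdge).Adj (x, y) w ∧ spiralRank w < spiralRank (x, y) := by
  rcases Int.emod_two_eq (x + y) with even | odd
  · refine ⟨(x, y - 1), ?_, ?_⟩
    · grind [mirrorSplit_adj_iff, SpiralEdge]
    · grind [spiralRank, Prod.Lex.toLex_lt_toLex]
  rcases Int.emod_two_eq x with inner | outer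
  · refine ⟨(x + 1, y), ?_, ?_⟩
    · grind [mirrorSplit_adj_iff, SpiralEdge]
    · grind [spiralRank, Prod.Lex.toLex_lt_toLex]
  · refine ⟨(x - 1, y), ?_, ?_⟩
    · grind [mirrorSplit_adj_iff, SpiralEdge]
    · -- When `x + y = 1`, crossing the strip leads back to the previous strip, or to the origin.
      simp only [spiralRank]
      split_ifs <;> rw [Prod.Lex.toLex_lt_toLex] <;> omega

theorem exists_adj_spiralRank_lt_of_top {x y : ℤ} (hxy : x < y) (hyx : -x ≤ y) :
    ∃ w, (mirrorSplit SpiralEdge).Adj (x, y) w ∧ spiralRank w < spiralRank (x, y) := by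
  rcases Int.emod_two_eq (x + y) with even | odd
  · refine ⟨(x + 1, y), ?_, ?_⟩
    · grind [mirrorSplit_adj_iff, SpiralEdge]
    · grind [spiralRank, Prod.Lex.toLex_lt_toLex]
  rcases Int.emod_two_eq y with outer | inner
  · refine ⟨(x, y - 1), ?_, ?_⟩
    · grind [mirrorSplit_adj_iff, SpiralEdge]
    · -- When `y = x + 1`, crossing the strip leads back to the previous strip.
      grind [spiralRank, Prod.Lex.toLex_lt_toLex]
  · refine ⟨(x, y + 1), ?_, ?_⟩
    · grind [mirrorSplit_adj_iff, SpiralEdge]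
    · grind [spiralRank, Prod.Lex.toLex_lt_toLex]

theorem exists_adj_spiralRank_lt {v : ℤ × ℤ} (hv : v ≠ 0) :
    ∃ w, (mirrorSplit SpiralEdge).Adj v w ∧ spiralRank w < spiralRank v := by
  wlog upper : -v.1 < v.2 ∧ v.2 ≤ v.1 ∨ v.1 < v.2 ∧ -v.1 ≤ v.2 generalizing v
  · have upper_neg : -(-v).1 < (-v).2 ∧ (-v).2 ≤ (-v).1 ∨ (-v).1 < (-v).2 ∧ -(-v).1 ≤ (-v).2 := by
      simp only [ne_eq, Prod.ext_iff, Prod.fst_zero, Prod.snd_zero] at hv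
      simp only [Prod.fst_neg, Prod.snd_neg]
      omega
    obtain ⟨w, adj, lt⟩ := this (neg_ne_zero.2 hv) upper_neg
    refine ⟨-w, ?_, ?_⟩
    · rwa [← mirrorSplit_adj_neg_neg spiralEdge_neg_sub_one_neg, neg_neg]
    · rwa [spiralRank_neg, ← spiralRank_neg v]
  rcases upper with ⟨hxy, hyx⟩ | ⟨hxy, hyx⟩
  · exact exists_adj_spiralRank_lt_of_right hxy hyx
  · exact exists_adj_spiralRank_lt_of_top hxy hyx

theorem isHamDoubleRay_mirrorSplit_spiralEdge : IsHamDoubleRay (mirrorSplit SpiralEdge) :=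
  ⟨inferInstance, connected_of_forall_exists_adj_lt 0 spiralRank fun _ => exists_adj_spiralRank_lt,
    ncard_neighborSet_mirrorSplit_spiralEdge⟩

theorem stmt_14 :
    ∃ D : Fin 2 → SimpleGraph (ℤ × ℤ),
      (∀ i, D i ≤ gridGraph ∧ IsHamDoubleRay (D i)) ∧
      (Pairwise fun i j => Disjoint (D i).edgeSet (D j).edgeSet) ∧
      (⋃ i, (D i).edgeSet) = gridGraph.edgeSet := by
  have sdiff : IsHamDoubleRay (gridGraph \ mirrorSplit SpiralEdge) := by
    rw [gridGraph_sdiff_mirrorSplit]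
    exact isHamDoubleRay_mirrorSplit_spiralEdge.of_iso (SimpleGraph.Iso.comap (.prodComm ℤ ℤ) _)
  exact isHamDoubleRay_mirrorSplit_spiralEdge.exists_decomposition
    (mirrorSplit_le_gridGraph SpiralEdge) sdiff
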